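/- Fix an integer k ≥ 2 and a real t with t_c < t < 1, where t_c = (k−1)/(k+1). Then for every φ with 0 ≤ φ < φ_e(t) and every n ≥ 0, the n-fold iterate satisfies B̃_{φ,t,k}^n(φ) < π. In particular, for t_c < t < 1 the rooted Cayley tree with branching number k has no Lee–Yang zeros with argument in [0, φ_e(t)). -/

import Mathlib

/-- The Blaschke product `B_{z,t,k}(w) = z·((w + t)/(1 + w·t))^k`. -/
noncomputable def Blaschke (z : ℂ) (t : ℝ) (k : ℕ) (w : ℂ) : ℂ :=
  z * ((w + (t : ℂ)) / (1 + w * (t : ℂ))) ^ k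

/-- The root with nonnegative imaginary part of the quadratic
`t·w² + ((k+1)·t² − (k−1))·w + t = 0` (for `t_c ≤ t < 1` the discriminant
`(k+1)²t⁴ − 2(k²+1)t² + (k−1)²` is `≤ 0`, so the root is
`(−b + i·√(−disc))/(2t)` with `b = (k+1)t² − (k−1)`). -/
noncomputable def wbullet (k : ℕ) (t : ℝ) : ℂ :=
  (-((((k : ℂ)) + 1) * (t : ℂ)^2 - ((k : ℂ) - 1)) +
    Complex.I * ((Real.sqrt (-(((k : ℝ) + 1)^2 * t^4 - 2 * ((k : ℝ)^2 + 1) * t^2 +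
      ((k : ℝ) - 1)^2)) : ℝ) : ℂ)) / (2 * (t : ℂ))

/-- The edge angle `φ_e(t) = Arg(w_•(t)·((1 + w_•(t)·t)/(w_•(t) + t))^k)`. -/
noncomputable def phie (k : ℕ) (t : ℝ) : ℝ :=
  (wbullet k t * ((1 + wbullet k t * (t : ℂ)) / (wbullet k t + (t : ℂ))) ^ k).arg

/-- `(z,t)` lies below the `φ_e` curve: either `0 ≤ t < t_c`, or
`t_c ≤ t < 1` and `φ_e(t) < |Arg z| ≤ π`. -/
def belowCurve (k : ℕ) (t : ℝ) (z : ℂ) : Prop :=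
  (0 ≤ t ∧ t < ((k : ℝ) - 1) / ((k : ℝ) + 1)) ∨
  (((k : ℝ) - 1) / ((k : ℝ) + 1) ≤ t ∧ t < 1 ∧ phie k t < |z.arg| ∧ |z.arg| ≤ Real.pi)

/-- The lift of the Blaschke product `B_{e^{iφ},t,k}` to `ℝ`:
`B̃_{φ,t,k}(θ) = k·θ − 2k·arctan(t·sin θ/(1 + t·cos θ)) + φ`. -/
noncomputable def Blift (φ t : ℝ) (k : ℕ) (θ : ℝ) : ℝ :=
  (k : ℝ) * θ - 2 * (k : ℝ) * Real.arctan (t * Real.sin θ / (1 + t * Real.cos θ)) + φ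

/-!
The lift `B̃_φ` of the Blaschke product is increasing, so as soon as `B̃_φ p < p` at some point `p`,
the interval `(-∞, p)` is mapped into itself. The right `p` is `θ_• = Arg w_•`: the quadratic
equation of `w_•` says that `B̃_φ' = 1` at `θ_•`, and `φ_e = θ_• - B̃₀(θ_•)` is the parameter at
which `θ_•` is a fixed point. This formula for `φ_e` a priori holds modulo `2π` only. It holds
exactly because `B̃₀` is increasing and convex on `[0, π]` with slope `1` at `θ_•`, whence
`0 ≤ B̃₀(θ_•) ≤ θ_• ≤ π`. A parameter `φ < φ_e` thus satisfies both `φ < θ_•` and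
`B̃_φ(θ_•) < θ_•`, and the orbit of `φ` stays below `θ_•`.
-/

theorem mapsTo_Iio_of_monotone_of_apply_lt {α : Type*} [Preorder α] {f : α → α} (hf : Monotone f)
    {p : α} (hp : f p < p) : Set.MapsTo f (Set.Iio p) (Set.Iio p) :=
  fun _ hx ↦ (hf (le_of_lt hx)).trans_lt hp

section UnitCircle

open Complex ComplexConjugate

theorem arctan_im_div_re {z : ℂ} (hz : 0 < z.re) : Real.arctan (z.im / z.re) = z.arg := by
  have harg := abs_lt.1 (abs_arg_lt_pi_div_two_iff.2 (Or.inl hz))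
  rw [← tan_arg, Real.arctan_tan harg.1 harg.2]

theorem conj_div_self_eq_exp_arg {z : ℂ} (hz : z ≠ 0) :
    conj z / z = exp ((-2 * z.arg : ℝ) * I) := by
  rw [div_eq_iff hz]
  calc conj z = conj (‖z‖ * exp (z.arg * I)) := by rw [norm_mul_exp_arg_mul_I]
    _ = ‖z‖ * exp (-(z.arg * I)) := by
      rw [map_mul, conj_ofReal, ← exp_conj, map_mul, conj_ofReal, conj_I, mul_neg]
    _ = exp ((-2 * z.arg : ℝ) * I) * (‖z‖ * exp (z.arg * I)) := by
      rw [mul_left_comm, ← exp_add]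
      push_cast
      ring_nf
    _ = exp ((-2 * z.arg : ℝ) * I) * z := by rw [norm_mul_exp_arg_mul_I]

theorem add_div_one_add_mul_eq_mul_conj_div {w : ℂ} (hw : ‖w‖ = 1) (t : ℝ) :
    (w + t) / (1 + w * t) = w * (conj (1 + w * t) / (1 + w * t)) := by
  have hww : w * conj w = 1 := by simp [mul_conj, normSq_eq_norm_sq, hw]
  rw [← mul_div_assoc]
  congr 1
  simp only [map_add, map_one, map_mul, conj_ofReal]
  linear_combination -(t : ℂ) * hww

end UnitCircle

section Blift

variable {t : ℝ}

theorem one_add_mul_cos_pos (ht : |t| < 1) (θ : ℝ) : 0 < 1 + t * Real.cos θ := by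
  have hlt : |t * Real.cos θ| < 1 := by
    rw [abs_mul]
    exact (mul_le_of_le_one_right (abs_nonneg t) (Real.abs_cos_le_one θ)).trans_lt ht
  linarith [(abs_lt.1 hlt).1]

theorem one_add_two_mul_cos_add_sq_eq (t θ : ℝ) :
    1 + 2 * t * Real.cos θ + t ^ 2 = (1 + t * Real.cos θ) ^ 2 + (t * Real.sin θ) ^ 2 := by
  linear_combination -t ^ 2 * Real.sin_sq_add_cos_sq θ

theorem one_add_two_mul_cos_add_sq_pos (ht : |t| < 1) (θ : ℝ) :
    0 < 1 + 2 * t * Real.cos θ + t ^ 2 := by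
  have := one_add_mul_cos_pos ht θ
  rw [one_add_two_mul_cos_add_sq_eq]
  positivity

theorem Blift_apply_zero (φ t : ℝ) (k : ℕ) : Blift φ t k 0 = φ := by simp [Blift]

theorem Blift_eq_Blift_zero_add (φ t : ℝ) (k : ℕ) (θ : ℝ) :
    Blift φ t k θ = Blift 0 t k θ + φ := by simp [Blift]

theorem hasDerivAt_arctan_mul_sin_div (ht : |t| < 1) (θ : ℝ) :
    HasDerivAt (fun x ↦ Real.arctan (t * Real.sin x / (1 + t * Real.cos x)))
      (t * (t + Real.cos θ) / (1 + 2 * t * Real.cos θ + t ^ 2)) θ := by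
  have hre := one_add_mul_cos_pos ht θ
  have hquot := ((Real.hasDerivAt_sin θ).const_mul t).fun_div
    (((Real.hasDerivAt_cos θ).const_mul t).const_add 1) hre.ne'
  refine hquot.arctan.congr_deriv ?_
  rw [one_add_two_mul_cos_add_sq_eq]
  field_simp
  linear_combination t ^ 2 * Real.sin_sq_add_cos_sq θ

theorem hasDerivAt_Blift (ht : |t| < 1) (φ : ℝ) (k : ℕ) (θ : ℝ) :
    HasDerivAt (Blift φ t k) (k * (1 - t ^ 2) / (1 + 2 * t * Real.cos θ + t ^ 2)) θ := by
  have hderiv := (((hasDerivAt_id' θ).const_mul (k : ℝ)).fun_sub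
    ((hasDerivAt_arctan_mul_sin_div ht θ).const_mul (2 * (k : ℝ)))).add_const φ
  refine hderiv.congr_deriv ?_
  have hden := (one_add_two_mul_cos_add_sq_pos ht θ).ne'
  field_simp
  ring

theorem differentiable_Blift (ht : |t| < 1) (φ : ℝ) (k : ℕ) : Differentiable ℝ (Blift φ t k) :=
  fun θ ↦ (hasDerivAt_Blift ht φ k θ).differentiableAt

theorem monotone_Blift (ht : |t| < 1) (φ : ℝ) (k : ℕ) : Monotone (Blift φ t k) := by
  refine monotone_of_deriv_nonneg (differentiable_Blift ht φ k) fun θ ↦ ?_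
  rw [(hasDerivAt_Blift ht φ k θ).deriv]
  have hsq : 0 ≤ 1 - t ^ 2 := sub_nonneg.2 ((sq_le_one_iff_abs_le_one t).2 ht.le)
  have := one_add_two_mul_cos_add_sq_pos ht θ
  positivity

theorem convexOn_Blift (ht : |t| < 1) (ht0 : 0 ≤ t) (φ : ℝ) (k : ℕ) :
    ConvexOn ℝ (Set.Icc 0 Real.pi) (Blift φ t k) := by
  have hdiff := differentiable_Blift ht φ k
  refine MonotoneOn.convexOn_of_deriv (convex_Icc 0 Real.pi) hdiff.continuous.continuousOn
    hdiff.differentiableOn fun x hx y hy hxy ↦ ?_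
  rw [interior_Icc] at hx hy
  have hcos : Real.cos y ≤ Real.cos x :=
    Real.cos_le_cos_of_nonneg_of_le_pi hx.1.le hy.2.le hxy
  have hsq : 0 ≤ 1 - t ^ 2 := sub_nonneg.2 ((sq_le_one_iff_abs_le_one t).2 ht.le)
  have hden := one_add_two_mul_cos_add_sq_pos ht y
  rw [(hasDerivAt_Blift ht φ k x).deriv, (hasDerivAt_Blift ht φ k y).deriv]
  gcongr

theorem re_im_one_add_exp_mul (t θ : ℝ) :
    (1 + Complex.exp (θ * Complex.I) * t).re = 1 + t * Real.cos θ ∧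
      (1 + Complex.exp (θ * Complex.I) * t).im = t * Real.sin θ := by
  simp [Complex.exp_ofReal_mul_I_re, Complex.exp_ofReal_mul_I_im, mul_comm t]

theorem Blift_eq_arg (ht : |t| < 1) (φ : ℝ) (k : ℕ) (θ : ℝ) :
    Blift φ t k θ = k * (θ - 2 * (1 + Complex.exp (θ * Complex.I) * t).arg) + φ := by
  obtain ⟨hre, him⟩ := re_im_one_add_exp_mul t θ
  rw [← arctan_im_div_re (hre ▸ one_add_mul_cos_pos ht θ), hre, him, Blift]
  ring

theorem exp_Blift_mul_I (ht : |t| < 1) (φ : ℝ) (k : ℕ) (θ : ℝ) :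
    Complex.exp (Blift φ t k θ * Complex.I) =
      Blaschke (Complex.exp (φ * Complex.I)) t k (Complex.exp (θ * Complex.I)) := by
  have hne : 1 + Complex.exp (θ * Complex.I) * t ≠ 0 := by
    refine fun h ↦ (one_add_mul_cos_pos ht θ).ne' ?_
    rw [← (re_im_one_add_exp_mul t θ).1, h, Complex.zero_re]
  rw [Blaschke, add_div_one_add_mul_eq_mul_conj_div (Complex.norm_exp_ofReal_mul_I θ),
    conj_div_self_eq_exp_arg hne, ← Complex.exp_add, ← Complex.exp_nat_mul, ← Complex.exp_add,
    Blift_eq_arg ht]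
  push_cast
  ring_nf

end Blift

section EdgeAngle

variable {k : ℕ} {t : ℝ}

theorem wbullet_eq_mk (k : ℕ) (t : ℝ) :
    wbullet k t = ⟨((k : ℝ) - 1 - (k + 1) * t ^ 2) / (2 * t),
      √(-(((k : ℝ) + 1) ^ 2 * t ^ 4 - 2 * ((k : ℝ) ^ 2 + 1) * t ^ 2 + ((k : ℝ) - 1) ^ 2)) /
        (2 * t)⟩ := by
  rw [Complex.mk_eq_add_mul_I, wbullet]
  push_cast
  ring

theorem wbullet_discr_nonpos (hk : 1 ≤ k) (htc : ((k : ℝ) - 1) / (k + 1) ≤ t) (ht1 : t ≤ 1) :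
    ((k : ℝ) + 1) ^ 2 * t ^ 4 - 2 * ((k : ℝ) ^ 2 + 1) * t ^ 2 + ((k : ℝ) - 1) ^ 2 ≤ 0 := by
  have hk1 : (1 : ℝ) ≤ k := by exact_mod_cast hk
  have htc' : (k : ℝ) - 1 ≤ t * (k + 1) := (div_le_iff₀ (by positivity)).1 htc
  have ht0 : 0 ≤ t := (div_nonneg (by linarith) (by positivity)).trans htc
  calc ((k : ℝ) + 1) ^ 2 * t ^ 4 - 2 * ((k : ℝ) ^ 2 + 1) * t ^ 2 + ((k : ℝ) - 1) ^ 2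
      = (t * (k + 1) - (k - 1)) * (t * (k + 1) + (k - 1)) * ((t + 1) * (t - 1)) := by ring
    _ ≤ 0 := mul_nonpos_of_nonneg_of_nonpos
        (mul_nonneg (by linarith) (by linarith))
        (mul_nonpos_of_nonneg_of_nonpos (by linarith) (by linarith))

theorem norm_wbullet (hk : 1 ≤ k) (ht0 : 0 < t) (htc : ((k : ℝ) - 1) / (k + 1) ≤ t)
    (ht1 : t ≤ 1) : ‖wbullet k t‖ = 1 := by
  have hdiscr := wbullet_discr_nonpos hk htc ht1
  rw [← pow_eq_one_iff_of_nonneg (norm_nonneg _) two_ne_zero, Complex.sq_norm, Complex.normSq_apply,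
    wbullet_eq_mk, ← sq, ← sq, div_pow, div_pow, Real.sq_sqrt (by linarith)]
  field_simp
  ring

theorem exp_arg_wbullet_mul_I (hk : 1 ≤ k) (ht0 : 0 < t) (htc : ((k : ℝ) - 1) / (k + 1) ≤ t)
    (ht1 : t ≤ 1) : Complex.exp ((wbullet k t).arg * Complex.I) = wbullet k t := by
  simpa [norm_wbullet hk ht0 htc ht1] using Complex.norm_mul_exp_arg_mul_I (wbullet k t)

theorem arg_wbullet_nonneg (k : ℕ) (ht0 : 0 ≤ t) : 0 ≤ (wbullet k t).arg := by
  rw [Complex.arg_nonneg_iff, wbullet_eq_mk]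
  positivity

theorem two_mul_cos_arg_wbullet (hk : 1 ≤ k) (ht0 : 0 < t)
    (htc : ((k : ℝ) - 1) / (k + 1) ≤ t) (ht1 : t ≤ 1) :
    2 * t * Real.cos (wbullet k t).arg = (k : ℝ) - 1 - (k + 1) * t ^ 2 := by
  have hnorm := norm_wbullet hk ht0 htc ht1
  have hne : wbullet k t ≠ 0 := norm_ne_zero_iff.1 (hnorm ▸ one_ne_zero)
  rw [Complex.cos_arg hne, hnorm, wbullet_eq_mk]
  field_simp

theorem hasDerivAt_Blift_arg_wbullet (hk : 1 ≤ k) (ht0 : 0 < t)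
    (htc : ((k : ℝ) - 1) / (k + 1) ≤ t) (ht1 : t < 1) (φ : ℝ) :
    HasDerivAt (Blift φ t k) 1 (wbullet k t).arg := by
  have ht : |t| < 1 := by rwa [abs_of_pos ht0]
  refine (hasDerivAt_Blift ht φ k _).congr_deriv ?_
  rw [div_eq_one_iff_eq (one_add_two_mul_cos_add_sq_pos ht _).ne',
    two_mul_cos_arg_wbullet hk ht0 htc ht1.le]
  ring

theorem Blift_arg_wbullet_mem_Icc (hk : 1 ≤ k) (ht0 : 0 < t)
    (htc : ((k : ℝ) - 1) / (k + 1) ≤ t) (ht1 : t < 1) :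
    Blift 0 t k (wbullet k t).arg ∈ Set.Icc 0 (wbullet k t).arg := by
  have ht : |t| < 1 := by rwa [abs_of_pos ht0]
  have harg := arg_wbullet_nonneg k ht0.le
  constructor
  · simpa only [Blift_apply_zero] using monotone_Blift ht 0 k harg
  · rcases harg.eq_or_lt with harg0 | hargpos
    · rw [← harg0, Blift_apply_zero]
    · have hslope := (convexOn_Blift ht ht0.le 0 k).slope_le_of_hasDerivAt
        (Set.left_mem_Icc.2 Real.pi_pos.le) ⟨harg, Complex.arg_le_pi _⟩ hargpos
        (hasDerivAt_Blift_arg_wbullet hk ht0 htc ht1 0)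
      rwa [slope_def_field, Blift_apply_zero, sub_zero, sub_zero, div_le_one hargpos] at hslope

theorem phie_eq_arg_div_Blaschke (k : ℕ) (t : ℝ) :
    phie k t = (wbullet k t / Blaschke 1 t k (wbullet k t)).arg := by
  rw [phie, Blaschke, one_mul, div_eq_mul_inv _ (_ ^ k), ← inv_pow, inv_div]

theorem phie_eq_arg_sub_Blift (hk : 1 ≤ k) (ht0 : 0 < t)
    (htc : ((k : ℝ) - 1) / (k + 1) ≤ t) (ht1 : t < 1) :
    phie k t = (wbullet k t).arg - Blift 0 t k (wbullet k t).arg := by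
  set θ := (wbullet k t).arg
  have ht : |t| < 1 := by rwa [abs_of_pos ht0]
  have hw : Complex.exp (θ * Complex.I) = wbullet k t := exp_arg_wbullet_mul_I hk ht0 htc ht1.le
  have hB : Complex.exp (Blift 0 t k θ * Complex.I) = Blaschke 1 t k (wbullet k t) := by
    simpa [hw] using exp_Blift_mul_I ht 0 k θ
  obtain ⟨hB0, hBθ⟩ := Blift_arg_wbullet_mem_Icc hk ht0 htc ht1
  have hmem : θ - Blift 0 t k θ ∈ Set.Ioc (-Real.pi) Real.pi :=
    ⟨by linarith [Real.pi_pos], by linarith [Complex.arg_le_pi (wbullet k t)]⟩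
  calc phie k t = (Complex.exp (θ * Complex.I) / Complex.exp (Blift 0 t k θ * Complex.I)).arg := by
        rw [phie_eq_arg_div_Blaschke, hw, hB]
    _ = (Complex.exp ((θ - Blift 0 t k θ : ℝ) * Complex.I)).arg := by
        rw [← Complex.exp_sub, Complex.ofReal_sub, sub_mul]
    _ = θ - Blift 0 t k θ := by
        rw [Complex.exp_mul_I, Complex.arg_cos_add_sin_mul_I hmem]

end EdgeAngle

theorem stmt10_general (k : ℕ) (hk : 1 ≤ k) (t : ℝ) (ht0 : 0 < t)
    (htc : ((k : ℝ) - 1) / ((k : ℝ) + 1) ≤ t) (ht1 : t < 1)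
    (φ : ℝ) (hφe : φ < phie k t) (n : ℕ) :
    (Blift φ t k)^[n] φ < (wbullet k t).arg := by
  have ht : |t| < 1 := by rwa [abs_of_pos ht0]
  rw [phie_eq_arg_sub_Blift hk ht0 htc ht1] at hφe
  have hB0 := (Blift_arg_wbullet_mem_Icc hk ht0 htc ht1).1
  have hstart : φ < (wbullet k t).arg := by linarith
  have hdrop : Blift φ t k (wbullet k t).arg < (wbullet k t).arg := by
    rw [Blift_eq_Blift_zero_add]
    linarith
  exact (mapsTo_Iio_of_monotone_of_apply_lt (monotone_Blift ht φ k) hdrop).iterate n hstart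

theorem stmt10 (k : ℕ) (hk : 2 ≤ k) (t : ℝ)
    (htc : ((k : ℝ) - 1) / ((k : ℝ) + 1) < t) (ht1 : t < 1)
    (φ : ℝ) (hφ0 : 0 ≤ φ) (hφe : φ < phie k t) (n : ℕ) :
    (Blift φ t k)^[n] φ < Real.pi := by
  have hk1 : 1 ≤ k := one_le_two.trans hk
  have ht0 : 0 < t :=
    (div_nonneg (sub_nonneg.2 (Nat.one_le_cast.2 hk1)) (by positivity)).trans_lt htc
  exact (stmt10_general k hk1 t ht0 htc.le ht1 φ hφe n).trans_le (Complex.arg_le_pi _)
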